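/- arXiv:1106.1400 — 2 statements merged into one kernel-verified Lean document; each statement's English description precedes it below -/
import Mathlib

section
/- Let ξ be an integrable random variable and let (Y^i)_{i∈I} be a nonempty family of supermartingales such that Y^i_t ≥ E[ξ | ℱ_t] P-almost surely for every i ∈ I and every t ∈ [0,T]. Let X = (X_t)_{t∈[0,T]} be an adapted process such that, for each t, X_t is an essential infimum of the family {Y^i_t : i ∈ I}, i.e. X_t ≤ Y^i_t P-almost surely for every i ∈ I, and every ℱ_t-measurable random variable Z with Z ≤ Y^i_t P-almost surely for all i ∈ I satisfies Z ≤ X_t P-almost surely. Then X_t is integrable with E[ξ | ℱ_t] ≤ X_t P-almost surely for every t, and X is a supermartingale with respect to (ℱ_t)_{t∈[0,T]}. -/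
/-!
Condition at time `s` the inequalities `X_t ≤ Y^i_t`: by monotonicity and the supermartingale
property of `Y^i`, the random variable `E[X_t | ℱ_s]` is an `ℱ_s`-measurable lower bound of every
`Y^i_s`, so it lies below their essential infimum `X_s`. Integrability of `X_t` comes from squeezing
it between an integrable lower bound of the family and one of its members.
-/

open MeasureTheory Filter Set

noncomputable section

/-- A process `Y` is a supermartingale on the time interval `[0, T]` with respect to the
filtration `ℱ` and the measure `P`: it is adapted, integrable, and satisfies
`E[Y_t | ℱ_s] ≤ Y_s` a.s. for all `0 ≤ s ≤ t ≤ T`. -/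
def SupermartingaleOn {Ω : Type*} {m0 : MeasurableSpace Ω}
    (ℱ : MeasureTheory.Filtration ℝ m0) (P : Measure Ω) (T : ℝ)
    (Y : ℝ → Ω → ℝ) : Prop :=
  (∀ t ∈ Set.Icc (0 : ℝ) T, StronglyMeasurable[ℱ t] (Y t)) ∧
  (∀ t ∈ Set.Icc (0 : ℝ) T, Integrable (Y t) P) ∧
  ∀ s ∈ Set.Icc (0 : ℝ) T, ∀ t ∈ Set.Icc (0 : ℝ) T, s ≤ t →
    (P[Y t | ℱ s]) ≤ᵐ[P] Y s

section EssInf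

variable {Ω E ι : Type*} {m m0 : MeasurableSpace Ω} {P : Measure Ω}

/-- `X` is an essential infimum of the family `Y` among the `m`-measurable functions: the greatest
lower bound of `Y`, up to `P`-null sets. The measure `P` may live on a larger σ-algebra, and the
members of `Y` need not be `m`-measurable. -/
structure IsEssInf [TopologicalSpace E] [LE E] (m : MeasurableSpace Ω) (P : Measure[m0] Ω)
    (Y : ι → Ω → E) (X : Ω → E) : Prop where
  stronglyMeasurable : StronglyMeasurable[m] X
  ae_le (i : ι) : X ≤ᵐ[P] Y i
  ae_le_of_forall_ae_le (Z : Ω → E) (hZ : StronglyMeasurable[m] Z) (hZY : ∀ i, Z ≤ᵐ[P] Y i) :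
    Z ≤ᵐ[P] X

section NormedLattice

variable [NormedAddCommGroup E] [Lattice E] [HasSolidNorm E] [IsOrderedAddMonoid E]

theorem integrable_of_ae_le_of_ae_le {f g h : Ω → E} (hg : AEStronglyMeasurable g P)
    (hfg : f ≤ᵐ[P] g) (hgh : g ≤ᵐ[P] h) (hf : Integrable f P) (hh : Integrable h P) :
    Integrable g P := by
  have hsub : Integrable (g - f) P :=
    (hh.sub hf).mono_nonneg (hg.sub hf.aestronglyMeasurable)
      (hfg.mono fun _ hω ↦ sub_nonneg.2 hω) (hgh.mono fun ω hω ↦ sub_le_sub_right hω (f ω))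
  simpa only [sub_add_cancel] using hsub.add hf

theorem IsEssInf.integrable {Y : ι → Ω → E} {X M : Ω → E} (hX : IsEssInf m P Y X) (hm : m ≤ m0)
    {i : ι} (hY : Integrable (Y i) P) (hM : StronglyMeasurable[m] M) (hMint : Integrable M P)
    (hMY : ∀ i, M ≤ᵐ[P] Y i) : Integrable X P :=
  integrable_of_ae_le_of_ae_le (hX.stronglyMeasurable.mono hm).aestronglyMeasurable
    (hX.ae_le_of_forall_ae_le M hM hMY) (hX.ae_le i) hMint hY

end NormedLattice

theorem IsEssInf.condExp_ae_le [NormedAddCommGroup E] [NormedSpace ℝ E] [CompleteSpace E]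
    [PartialOrder E] [ClosedIciTopology E] [IsOrderedAddMonoid E] [IsOrderedModule ℝ E]
    {Y Z : ι → Ω → E} {X f : Ω → E} (hX : IsEssInf m P Y X)
    (hf : Integrable f P) (hZ : ∀ i, Integrable (Z i) P) (hfZ : ∀ i, f ≤ᵐ[P] Z i)
    (hZY : ∀ i, P[Z i | m] ≤ᵐ[P] Y i) : P[f | m] ≤ᵐ[P] X :=
  hX.ae_le_of_forall_ae_le _ stronglyMeasurable_condExp fun i ↦
    (condExp_mono hf (hZ i) (hfZ i)).trans (hZY i)

theorem essInf_supermartingale_general {τ : Type*} [Preorder τ] [NormedAddCommGroup E]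
    [NormedSpace ℝ E] [CompleteSpace E] [Lattice E] [HasSolidNorm E] [IsOrderedAddMonoid E]
    [IsOrderedModule ℝ E] [Nonempty ι] (ℱ : Filtration τ m0) [SigmaFiniteFiltration P ℱ]
    {Y : ι → τ → Ω → E} {X M : τ → Ω → E} (hY : ∀ i, Supermartingale (Y i) ℱ P)
    (hM : StronglyAdapted ℱ M) (hMint : ∀ t, Integrable (M t) P)
    (hMY : ∀ i t, M t ≤ᵐ[P] Y i t) (hX : ∀ t, IsEssInf (ℱ t) P (fun i ↦ Y i t) (X t)) :
    (∀ t, M t ≤ᵐ[P] X t) ∧ Supermartingale X ℱ P := by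
  inhabit ι
  have hXint (t : τ) : Integrable (X t) P :=
    (hX t).integrable (ℱ.le t) ((hY default).integrable t) (hM t) (hMint t) (hMY · t)
  have hXcond (s t : τ) (hst : s ≤ t) : P[X t | ℱ s] ≤ᵐ[P] X s :=
    (hX s).condExp_ae_le (hXint t) (fun i ↦ (hY i).integrable t) (hX t).ae_le
      fun i ↦ (hY i).condExp_ae_le hst
  exact ⟨fun t ↦ (hX t).ae_le_of_forall_ae_le (M t) (hM t) (hMY · t),
    fun t ↦ (hX t).stronglyMeasurable, hXcond, hXint⟩

/-- The filtration `ℱ` observed only at the times in `S`. It turns a process on part of the time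
axis into a process indexed by the subtype, to which `Supermartingale` applies. -/
def restrictFiltration {τ : Type*} [Preorder τ] (ℱ : Filtration τ m0) (S : Set τ) :
    Filtration S m0 where
  seq t := ℱ t
  mono' _ _ hst := ℱ.mono hst
  le' t := ℱ.le t

theorem supermartingaleOn_iff_supermartingale {ℱ : Filtration ℝ m0} {T : ℝ} {Y : ℝ → Ω → ℝ} :
    SupermartingaleOn ℱ P T Y ↔
      Supermartingale (fun t : Icc 0 T ↦ Y t) (restrictFiltration ℱ (Icc 0 T)) P where
  mp h := ⟨fun t ↦ h.1 t t.2, fun s t hst ↦ h.2.2 s s.2 t t.2 hst, fun t ↦ h.2.1 t t.2⟩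
  mpr h := ⟨fun t ht ↦ h.stronglyMeasurable ⟨t, ht⟩, fun t ht ↦ h.integrable ⟨t, ht⟩,
    fun s hs t ht hst ↦ h.condExp_ae_le (i := ⟨s, hs⟩) (j := ⟨t, ht⟩) hst⟩

end EssInf

/-- Proposition 3.4 (first assertion): the adapted process of pointwise essential infima of a
nonempty family of supermartingales, each dominating the martingale `E[ξ | ℱ_·]`, dominates
`E[ξ | ℱ_·]`, is integrable, and is itself a supermartingale. -/
theorem essInf_supermartingale
    {Ω : Type*} {m0 : MeasurableSpace Ω} (ℱ : MeasureTheory.Filtration ℝ m0)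
    (P : Measure Ω) [IsProbabilityMeasure P] (T : ℝ) (hT : 0 < T)
    (ξ : Ω → ℝ) (hξ : Integrable ξ P)
    {ι : Type*} [Nonempty ι] (Y : ι → ℝ → Ω → ℝ)
    (hY : ∀ i, SupermartingaleOn ℱ P T (Y i))
    (hYξ : ∀ i, ∀ t ∈ Set.Icc (0 : ℝ) T, (P[ξ | ℱ t]) ≤ᵐ[P] Y i t)
    (X : ℝ → Ω → ℝ)
    (hXadapted : ∀ t ∈ Set.Icc (0 : ℝ) T, StronglyMeasurable[ℱ t] (X t))
    (hXle : ∀ t ∈ Set.Icc (0 : ℝ) T, ∀ i, X t ≤ᵐ[P] Y i t)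
    (hXinf : ∀ t ∈ Set.Icc (0 : ℝ) T, ∀ Z : Ω → ℝ, StronglyMeasurable[ℱ t] Z →
      (∀ i, Z ≤ᵐ[P] Y i t) → Z ≤ᵐ[P] X t) :
    (∀ t ∈ Set.Icc (0 : ℝ) T, Integrable (X t) P ∧ (P[ξ | ℱ t]) ≤ᵐ[P] X t) ∧
      SupermartingaleOn ℱ P T X := by
  obtain ⟨hξX, hX⟩ := essInf_supermartingale_general (restrictFiltration ℱ (Icc 0 T))
    (M := fun t ↦ P[ξ | ℱ t]) (fun i ↦ supermartingaleOn_iff_supermartingale.1 (hY i))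
    (fun _ ↦ stronglyMeasurable_condExp) (fun _ ↦ integrable_condExp) (fun i t ↦ hYξ i t t.2)
    (fun t ↦ ⟨hXadapted t t.2, hXle t t.2, hXinf t t.2⟩)
  exact ⟨fun t ht ↦ ⟨hX.integrable ⟨t, ht⟩, hξX ⟨t, ht⟩⟩,
    supermartingaleOn_iff_supermartingale.2 hX⟩
end
end

section
/- Let E₀ : L¹(Ω, ℱ, P) → ℝ ∪ {+∞} be a functional which is (i) monotone: if ξ ≤ ζ P-almost surely then E₀(ξ) ≤ E₀(ζ); and (ii) continuous along increasing sequences: whenever (ζ^n)_{n≥1} ⊂ L¹ increases P-almost surely to some ζ ∈ L¹, then E₀(ζ) = lim_{n→∞} E₀(ζ^n). Then E₀ is lower semicontinuous with respect to L¹-convergence: for every sequence (ξ^n) ⊂ L¹ converging to ξ in L¹, one has E₀(ξ) ≤ liminf_{n→∞} E₀(ξ^n). -/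
open MeasureTheory Filter Set

noncomputable section

/-!
A sublevel set `{E₀ ≤ c}` is a lower set closed under increasing limits, and in a Banach lattice
such a set `S` is closed: a point `a` of its closure is the limit of some `xₙ ∈ S` with
`∑ ‖xₙ - a‖ < ∞`, and then `yₙ = a - ∑_{k ≥ n} |xₖ - a|` increases to `a` while `yₙ ≤ xₙ`.
-/

open scoped Topology ENNReal

lemma exists_seq_mem_summable_dist_of_mem_closure {X : Type*} [PseudoMetricSpace X]
    {s : Set X} {a : X} (ha : a ∈ closure s) :
    ∃ x : ℕ → X, (∀ n, x n ∈ s) ∧ Summable fun n => dist (x n) a := by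
  have hclose (n : ℕ) : ∃ x ∈ s, dist a x < (1 / 2 : ℝ) ^ n :=
    Metric.mem_closure_iff.1 ha _ (by positivity)
  choose x hxs hxa using hclose
  refine ⟨x, hxs, summable_geometric_two.of_nonneg_of_le (fun _ => dist_nonneg) fun n => ?_⟩
  exact (dist_comm (x n) a).trans_le (hxa n).le

section BanachLattice

variable {X : Type*} [NormedAddCommGroup X] [Lattice X] [HasSolidNorm X] [IsOrderedAddMonoid X]
  [CompleteSpace X]

lemma exists_monotone_tendsto_le_of_summable_dist {x : ℕ → X} {a : X}
    (hx : Summable fun n => dist (x n) a) :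
    ∃ y : ℕ → X, Monotone y ∧ Tendsto y atTop (𝓝 a) ∧ ∀ n, y n ≤ x n := by
  set d : ℕ → X := fun n => |x n - a|
  have hd : Summable d := .of_norm <| by simpa only [d, norm_abs_eq_norm, ← dist_eq_norm] using hx
  set tail : ℕ → X := fun n => ∑' k, d (k + n)
  have htail_succ (n : ℕ) : tail n = d n + tail (n + 1) := by
    have h := ((summable_nat_add_iff n).2 hd).tsum_eq_zero_add
    simpa only [tail, zero_add, add_assoc, add_comm 1] using h
  have htail_nonneg (n : ℕ) : 0 ≤ tail n := tsum_nonneg fun _ => abs_nonneg _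
  refine ⟨fun n => a - tail n, monotone_nat_of_le_succ fun n => ?_, ?_, fun n => ?_⟩
  · exact sub_le_sub_left (htail_succ n ▸ le_add_of_nonneg_left (abs_nonneg _)) a
  · simpa only [sub_zero] using (tendsto_sum_nat_add d).const_sub a
  · have hd_le : d n ≤ tail n := htail_succ n ▸ le_add_of_nonneg_right (htail_nonneg (n + 1))
    have ha_sub_le : a - x n ≤ d n := (le_abs_self _).trans_eq (abs_sub_comm _ _)
    exact sub_le_comm.1 (ha_sub_le.trans hd_le)

theorem isClosed_of_isLowerSet_of_monotone_tendsto {s : Set X} (hs : IsLowerSet s)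
    (hlim : ∀ (y : ℕ → X) (a : X), Monotone y → Tendsto y atTop (𝓝 a) → (∀ n, y n ∈ s) → a ∈ s) :
    IsClosed s := by
  refine isClosed_of_closure_subset fun a ha => ?_
  obtain ⟨x, hxs, hxa⟩ := exists_seq_mem_summable_dist_of_mem_closure ha
  obtain ⟨y, hy_mono, hya, hyx⟩ := exists_monotone_tendsto_le_of_summable_dist hxa
  exact hlim y a hy_mono hya fun n => hs (hyx n) (hxs n)

end BanachLattice

section Lp

variable {Ω E : Type*} {m0 : MeasurableSpace Ω} {μ : Measure Ω} {p : ℝ≥0∞} [NormedAddCommGroup E]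

lemma ae_monotone_coeFn_Lp [PartialOrder E] {ι : Type*} [Preorder ι] [Countable ι]
    {f : ι → Lp E p μ} (hf : Monotone f) : ∀ᵐ ω ∂μ, Monotone fun i => f i ω := by
  have hle : ∀ᵐ ω ∂μ, ∀ i j, i ≤ j → f i ω ≤ f j ω := by
    simp only [ae_all_iff]
    exact fun i j hij => (Lp.coeFn_le _ _).2 (hf hij)
  filter_upwards [hle] with ω hω i j hij using hω i j hij

lemma tendsto_eLpNorm_one_of_tendsto_integral_norm {ι : Type*} {l : Filter ι} {f : ι → Ω → E}
    (hf : ∀ i, Integrable (f i) μ) (h : Tendsto (fun i => ∫ ω, ‖f i ω‖ ∂μ) l (𝓝 0)) :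
    Tendsto (fun i => eLpNorm (f i) 1 μ) l (𝓝 0) := by
  simpa only [eLpNorm_one_eq_lintegral_enorm, ofReal_integral_norm_eq_lintegral_enorm (hf _),
    ENNReal.ofReal_zero] using ENNReal.tendsto_ofReal h

variable [Lattice E] [HasSolidNorm E] [IsOrderedAddMonoid E] [CompleteSpace E] [Fact (1 ≤ p)]

theorem lowerSemicontinuous_Lp_of_monotone_and_monotone_convergence
    {β : Type*} [LinearOrder β] [TopologicalSpace β] [ClosedIicTopology β] (E₀ : (Ω → E) → β)
    (hmono : ∀ ξ ζ : Ω → E, MemLp ξ p μ → MemLp ζ p μ → ξ ≤ᵐ[μ] ζ → E₀ ξ ≤ E₀ ζ)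
    (hmonconv : ∀ (ζs : ℕ → Ω → E) (ζ : Ω → E), (∀ n, MemLp (ζs n) p μ) → MemLp ζ p μ →
      (∀ᵐ ω ∂μ, Monotone fun n => ζs n ω) →
      (∀ᵐ ω ∂μ, Tendsto (fun n => ζs n ω) atTop (𝓝 (ζ ω))) →
      Tendsto (fun n => E₀ (ζs n)) atTop (𝓝 (E₀ ζ))) :
    LowerSemicontinuous fun f : Lp E p μ => E₀ f := by
  refine lowerSemicontinuous_iff_isClosed_preimage.2 fun c =>
    isClosed_of_isLowerSet_of_monotone_tendsto ?_ ?_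
  · intro g f hfg hg
    exact (hmono f g (Lp.memLp f) (Lp.memLp g) ((Lp.coeFn_le f g).2 hfg)).trans hg
  · intro g f hg hgf hgc
    obtain ⟨φ, hφ, hgφ⟩ := (tendstoInMeasure_of_tendsto_Lp hgf).exists_seq_tendsto_ae
    have hE₀ : Tendsto (fun n => E₀ (g (φ n))) atTop (𝓝 (E₀ f)) :=
      hmonconv (fun n => g (φ n)) f (fun n => Lp.memLp (g (φ n))) (Lp.memLp f)
        (ae_monotone_coeFn_Lp (hg.comp hφ.monotone)) hgφ
    exact le_of_tendsto' hE₀ fun n => hgc (φ n)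

theorem lsc_of_monotone_and_monotone_convergence_general
    {β : Type*} [CompleteLinearOrder β] [TopologicalSpace β] [ClosedIicTopology β]
    (E₀ : (Ω → E) → β)
    (hmono : ∀ ξ ζ : Ω → E, MemLp ξ p μ → MemLp ζ p μ → ξ ≤ᵐ[μ] ζ → E₀ ξ ≤ E₀ ζ)
    (hmonconv : ∀ (ζs : ℕ → Ω → E) (ζ : Ω → E), (∀ n, MemLp (ζs n) p μ) → MemLp ζ p μ →
      (∀ᵐ ω ∂μ, Monotone fun n => ζs n ω) →
      (∀ᵐ ω ∂μ, Tendsto (fun n => ζs n ω) atTop (𝓝 (ζ ω))) →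
      Tendsto (fun n => E₀ (ζs n)) atTop (𝓝 (E₀ ζ)))
    {ι : Type*} {l : Filter ι} {ξs : ι → Ω → E} {ξ : Ω → E}
    (hξs : ∀ i, MemLp (ξs i) p μ) (hξ : MemLp ξ p μ)
    (hconv : Tendsto (fun i => eLpNorm (ξs i - ξ) p μ) l (𝓝 0)) :
    E₀ ξ ≤ liminf (fun i => E₀ (ξs i)) l := by
  have hcongr {ζ : Ω → E} (hζ : MemLp ζ p μ) : E₀ (hζ.toLp ζ) = E₀ ζ :=
    (hmono _ _ (Lp.memLp _) hζ hζ.coeFn_toLp.le).antisymm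
      (hmono _ _ hζ (Lp.memLp _) hζ.coeFn_toLp.symm.le)
  have hlsc := lowerSemicontinuous_Lp_of_monotone_and_monotone_convergence E₀ hmono hmonconv
  have hLp : Tendsto (fun i => (hξs i).toLp (ξs i)) l (𝓝 (hξ.toLp ξ)) :=
    (Lp.tendsto_Lp_iff_tendsto_eLpNorm'' ξs hξs ξ hξ).2 hconv
  calc E₀ ξ = E₀ (hξ.toLp ξ) := (hcongr hξ).symm
    _ ≤ liminf (fun f : Lp E p μ => E₀ f) (𝓝 (hξ.toLp ξ)) := hlsc.le_liminf _
    _ ≤ liminf (fun i => E₀ ((hξs i).toLp (ξs i))) l := hLp.liminf_le_liminf_comp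
    _ = liminf (fun i => E₀ (ξs i)) l := by simp only [hcongr]

end Lp

/-- Theorem 4.9 (abstract core): a functional `E₀` on `L¹`, with values in `ℝ ∪ {+∞}`, which is
monotone and continuous along a.s. increasing `L¹`-sequences, is lower semicontinuous with
respect to `L¹`-convergence. -/
theorem lsc_of_monotone_and_monotone_convergence
    {Ω : Type*} {m0 : MeasurableSpace Ω} (P : Measure Ω) [IsProbabilityMeasure P]
    (E₀ : (Ω → ℝ) → EReal)
    (hne_bot : ∀ ξ, E₀ ξ ≠ ⊥)
    (hmono : ∀ ξ ζ : Ω → ℝ, Integrable ξ P → Integrable ζ P →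
      ξ ≤ᵐ[P] ζ → E₀ ξ ≤ E₀ ζ)
    (hmonconv : ∀ (ζs : ℕ → Ω → ℝ) (ζ : Ω → ℝ), (∀ n, Integrable (ζs n) P) →
      Integrable ζ P → (∀ᵐ ω ∂P, Monotone fun n => ζs n ω) →
      (∀ᵐ ω ∂P, Tendsto (fun n => ζs n ω) atTop (nhds (ζ ω))) →
      Tendsto (fun n => E₀ (ζs n)) atTop (nhds (E₀ ζ)))
    (ξs : ℕ → Ω → ℝ) (ξ : Ω → ℝ)
    (hξs : ∀ n, Integrable (ξs n) P) (hξ : Integrable ξ P)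
    (hL1conv : Tendsto (fun n => ∫ ω, |ξs n ω - ξ ω| ∂P) atTop (nhds 0)) :
    E₀ ξ ≤ liminf (fun n => E₀ (ξs n)) atTop := by
  simp only [← memLp_one_iff_integrable] at hmono hmonconv hξs hξ
  exact lsc_of_monotone_and_monotone_convergence_general E₀ hmono hmonconv hξs hξ
    (tendsto_eLpNorm_one_of_tendsto_integral_norm
      (fun n => ((hξs n).sub hξ).integrable le_rfl) hL1conv)
end
end
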